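/- Let (aₙ)_{n∈ℕ} be a sequence of complex numbers such that Σ_{n=1}^∞ |aₙ| e^{−πn/2} < ∞, and define f(x) = Σ_{n=1}^∞ aₙ Lₙ(x) for x > 0, where Lₙ(x) = ∫₀^x K_{in}(t)/(x² − t²)^{1/2} dt is the Lebedev kernel (π/(2 cosh(πn/2))) K_{in/2}(x)[I_{in/2}(x) + I_{−in/2}(x)]. Then for every n ∈ ℕ the integral ∫₀^∞ Φₙ(x) f(x) dx converges absolutely, where Φₙ(x) = x ∫_{−π}^{π} K₀(x cosh u) sinh(2u) sin(nu) du, and aₙ = (sinh(πn)/π³) ∫₀^∞ Φₙ(x) f(x) dx. -/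

import Mathlib

/-!
The inversion formula is a biorthogonality relation: for `m, n ≥ 1`,
`∫₀^∞ Φₙ(x) Lₘ(x) dx` is `π³ / sinh(πn)` if `m = n` and `0` otherwise. Given this, `f` is
integrated against `Φₙ` term by term.

To compute the pairing, insert the integrals defining `Φₙ` and `Lₘ` and integrate in `x` first.
Writing `K₀(cx) = ∫_x^∞ e^{-cw} / √(w² - x²) dw`, Tonelli's theorem and the arcsine integral give
`∫_t^∞ x K₀(cx) / √(x² - t²) dx = π e^{-ct} / (2c)` (`lintegral_kernel`, `integral_kernel`). With
`c = cosh u` the remaining `t`-integral is the Laplace transform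
`∫₀^∞ K_{iτ}(t) e^{-t cosh u} dt = π sin(τu) / (sinh(πτ) sinh u)` (`laplace_besselKi`), and since
`sinh(2u) = 2 sinh u cosh u` what is left is `∫_{-π}^{π} sin(mu) sin(nu) du` up to a constant.

The Laplace transform is itself the Fourier transform of `w ↦ 1 / (cosh w + cosh u)`, which is
reduced to that of `1 / (4 cosh²(w/2))`; the latter is the Beta integral `B(1 + iτ, 1 - iτ)` after
a logistic change of variables.

Absolute convergence rests on the `L²` norm `∫₀^∞ K_{iτ}(t)² dt = π² / (4 cosh(πτ))`
(`integral_besselKi_sq`), which yields `∫₀^∞ |K_{iτ}(t)| e^{-t} dt = O(e^{-πτ/2})` and hence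
`∫₀^∞ |Φₙ Lₘ| = O(e^{-πm/2})` uniformly in `n` (`pairing`). This is the rate occurring in the
summability hypothesis, so the series of `L¹` norms converges.
-/

open MeasureTheory Real

/-- The modified Bessel function of the second kind of purely imaginary order `iτ`,
`K_{iτ}(x) = ∫₀^∞ e^{−x cosh u} cos(τu) du` (real-valued). -/
noncomputable def besselKi (τ x : ℝ) : ℝ :=
  ∫ u in Set.Ioi (0 : ℝ), Real.exp (-x * Real.cosh u) * Real.cos (τ * u)

/-- The Lebedev kernel `Lₙ(x) = ∫₀^x K_{in}(t)/(x² − t²)^{1/2} dt`, which equals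
`(π/(2 cosh(πn/2))) K_{in/2}(x)[I_{in/2}(x) + I_{−in/2}(x)]`. -/
noncomputable def lebedevL (n : ℕ) (x : ℝ) : ℝ :=
  ∫ t in (0 : ℝ)..x, besselKi n t / Real.sqrt (x ^ 2 - t ^ 2)

/-- The kernel `Φₙ(x) = x ∫_{−π}^{π} K₀(x cosh u) sinh(2u) sin(nu) du`. -/
noncomputable def PhiKer (n : ℕ) (x : ℝ) : ℝ :=
  x * ∫ u in (-π)..π, besselKi 0 (x * Real.cosh u) * Real.sinh (2 * u) * Real.sin (n * u)

/-! ### Exponential bounds and the Fourier transforms of `sech²` and `sech` -/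

lemma integrable_exp_neg_mul_abs' {c : ℝ} (hc : 0 < c) :
    Integrable (fun u : ℝ => Real.exp (-c * |u|)) := by
  have h := integrableOn_exp_mul_Ioi (a := -c) (by linarith) 0
  have h2 : IntegrableOn (fun u : ℝ => Real.exp (-c * |u|)) (Set.Ioi 0) :=
    h.congr_fun (fun x hx => by simp [abs_of_pos (Set.mem_Ioi.1 hx)]) measurableSet_Ioi
  rw [← integrableOn_univ, ← Set.Iic_union_Ioi (a := (0 : ℝ))]
  refine IntegrableOn.union ?_ h2
  have := integrableOn_exp_mul_Iic (a := c) hc 0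
  exact this.congr_fun (fun x hx => by simp [abs_of_nonpos (Set.mem_Iic.1 hx)]) measurableSet_Iic

lemma exp_abs_le_two_mul_cosh (u : ℝ) : Real.exp |u| ≤ 2 * Real.cosh u := by
  rw [← Real.cosh_abs, Real.cosh_eq]
  linarith [Real.exp_pos (-|u|)]

/-- The arithmetic-geometric mean inequality for `(e^{|u|} + e^{|v|}) / 2`. -/
lemma exp_le_cosh_add_cosh (u v : ℝ) :
    Real.exp ((|u| + |v|) / 2) ≤ Real.cosh u + Real.cosh v := by
  have h1 := exp_abs_le_two_mul_cosh u
  have h2 := exp_abs_le_two_mul_cosh v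
  have h3 : Real.exp ((|u| + |v|) / 2) = Real.exp (|u| / 2) * Real.exp (|v| / 2) := by
    rw [← Real.exp_add]; ring_nf
  have h4 : Real.exp |u| = Real.exp (|u| / 2) ^ 2 := by
    rw [← Real.exp_nat_mul]; ring_nf
  have h5 : Real.exp |v| = Real.exp (|v| / 2) ^ 2 := by
    rw [← Real.exp_nat_mul]; ring_nf
  nlinarith [sq_nonneg (Real.exp (|u| / 2) - Real.exp (|v| / 2))]

lemma inv_cosh_add_cosh_le (u v : ℝ) :
    (Real.cosh u + Real.cosh v)⁻¹ ≤ Real.exp (-(1 / 2) * |u|) * Real.exp (-(1 / 2) * |v|) := by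
  have h := inv_anti₀ (Real.exp_pos _) (exp_le_cosh_add_cosh u v)
  rw [← Real.exp_neg] at h
  rw [← Real.exp_add]
  exact h.trans_eq (by congr 1; ring)

lemma cosh_add_cosh_pos (u v : ℝ) : 0 < Real.cosh u + Real.cosh v :=
  add_pos (Real.cosh_pos u) (Real.cosh_pos v)

/-- The logistic function. -/
noncomputable def logis (w : ℝ) : ℝ := (1 + Real.exp (-w))⁻¹

lemma one_sub_logis (w : ℝ) : 1 - logis w = Real.exp (-w) * logis w := by
  unfold logis
  have := Real.exp_pos (-w)
  field_simp
  ring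

lemma logis_pos (w : ℝ) : 0 < logis w := by unfold logis; positivity

lemma logis_lt_one (w : ℝ) : logis w < 1 := by
  have := mul_pos (Real.exp_pos (-w)) (logis_pos w)
  rw [← one_sub_logis] at this
  linarith

lemma logis_image : logis '' Set.univ = Set.Ioo 0 1 := by
  ext y
  simp only [Set.image_univ, Set.mem_range, Set.mem_Ioo]
  constructor
  · rintro ⟨w, rfl⟩
    exact ⟨logis_pos w, logis_lt_one w⟩
  · rintro ⟨h0, h1⟩
    refine ⟨-Real.log ((1 - y) / y), ?_⟩
    unfold logis
    rw [neg_neg, Real.exp_log (div_pos (by linarith) h0)]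
    field_simp
    ring

lemma logis_inj : Set.InjOn logis Set.univ := by
  intro x _ y _ h
  unfold logis at h
  have := inv_injective h
  have := Real.exp_injective (add_left_cancel this)
  linarith

lemma hasDerivAt_logis (w : ℝ) : HasDerivAt logis (logis w * (1 - logis w)) w := by
  have h := ((hasDerivAt_neg w).exp.const_add 1).inv (by positivity)
  refine h.congr_deriv ?_
  rw [one_sub_logis]
  unfold logis
  field_simp

lemma logis_mul (w : ℝ) : logis w * (1 - logis w) = ((2 * Real.cosh (w / 2))⁻¹) ^ 2 := by
  rw [one_sub_logis]
  unfold logis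
  have h : Real.exp (-w) = Real.exp (-(w / 2)) ^ 2 := by
    rw [← Real.exp_nat_mul]; ring_nf
  have h2 : Real.exp (w / 2) * Real.exp (-(w / 2)) = 1 := by rw [← Real.exp_add]; simp
  rw [Real.cosh_eq, h]
  have := Real.exp_pos (-(w / 2))
  have := Real.exp_pos (w / 2)
  have e : 2 * ((Real.exp (w / 2) + Real.exp (-(w / 2))) / 2) =
    (1 + Real.exp (-(w / 2)) ^ 2) / Real.exp (-(w / 2)) := by
    field_simp
    linarith
  rw [e]
  field_simp

/-- The substitution `x = 1/(1 + e^{-w})` in Euler's Beta integral `B(a + iτ, a - iτ)`. -/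
lemma betaIntegral_eq_fourier (a τ : ℝ) :
    Complex.betaIntegral (a + τ * Complex.I) (a - τ * Complex.I) =
      ∫ w : ℝ, (((2 * Real.cosh (w / 2))⁻¹ ^ (2 * a) : ℝ) : ℂ) * Complex.exp (τ * w * Complex.I) := by
  unfold Complex.betaIntegral
  rw [intervalIntegral.integral_of_le zero_le_one, integral_Ioc_eq_integral_Ioo, ← logis_image,
    integral_image_eq_integral_abs_deriv_smul MeasurableSet.univ
      (fun w _ => (hasDerivAt_logis w).hasDerivWithinAt) logis_inj, Measure.restrict_univ]
  refine integral_congr_ae (Filter.Eventually.of_forall fun w => ?_)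
  have p := logis_pos w
  have q : 0 < 1 - logis w := by linarith [logis_lt_one w]
  have pc : (logis w : ℂ) ≠ 0 := by exact_mod_cast p.ne'
  have qc : ((1 - logis w : ℝ) : ℂ) ≠ 0 := by exact_mod_cast q.ne'
  have hlog : Real.log (1 - logis w) = -w + Real.log (logis w) := by
    rw [one_sub_logis, Real.log_mul (Real.exp_pos _).ne' p.ne', Real.log_exp]
  have hs : 0 < (2 * Real.cosh (w / 2))⁻¹ := inv_pos.2 (mul_pos two_pos (Real.cosh_pos _))
  have e0 : 2 * Real.log ((2 * Real.cosh (w / 2))⁻¹) = Real.log (logis w) + Real.log (1 - logis w) := by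
    rw [← Real.log_mul p.ne' q.ne', logis_mul, Real.log_pow]; simp
  have e1 : (1 : ℂ) - (logis w : ℂ) = ((1 - logis w : ℝ) : ℂ) := by push_cast; ring
  simp only [abs_of_pos (mul_pos p q), Complex.real_smul]
  rw [e1, Complex.cpow_sub _ _ pc, Complex.cpow_sub _ _ qc, Complex.cpow_one, Complex.cpow_one]
  have e2 : (((2 * Real.cosh (w / 2))⁻¹ ^ (2 * a) : ℝ) : ℂ) =
      Complex.exp ((Real.log (logis w) + Real.log (1 - logis w) : ℝ) * a) := by
    rw [Real.rpow_def_of_pos hs, ← e0, Complex.ofReal_exp]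
    congr 1; push_cast; ring
  rw [e2, Complex.cpow_def_of_ne_zero pc, Complex.cpow_def_of_ne_zero qc, ← Complex.ofReal_log p.le,
    ← Complex.ofReal_log q.le, ← Complex.exp_add]
  rw [Complex.ofReal_mul]
  field_simp
  rw [← Complex.exp_add]
  congr 1
  rw [hlog]
  push_cast
  ring

/-- Fourier transform of `1/(4 cosh²(w/2))`. -/
lemma fourier_sech_sq {τ : ℝ} (hτ : τ ≠ 0) :
    ∫ w : ℝ, (((2 * Real.cosh (w / 2))⁻¹ ^ 2 : ℝ) : ℂ) * Complex.exp (τ * w * Complex.I) =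
      ((π * τ / Real.sinh (π * τ) : ℝ) : ℂ) := by
  have h := betaIntegral_eq_fourier 1 τ
  have h2 := Complex.Gamma_mul_Gamma_eq_betaIntegral (s := (1 : ℝ) + τ * Complex.I)
    (t := (1 : ℝ) - τ * Complex.I) (by simp) (by simp)
  rw [h] at h2
  have e : ((1 : ℝ) + τ * Complex.I : ℂ) + ((1 : ℝ) - τ * Complex.I) = 2 := by push_cast; ring
  rw [e, show (2 : ℂ) = (1 : ℕ) + 1 by norm_num, Complex.Gamma_nat_eq_factorial] at h2
  simp only [Nat.factorial, mul_one, Nat.cast_one, Complex.ofReal_one, one_mul] at h2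
  have e3 : ∀ w : ℝ, (2 * Real.cosh (w / 2))⁻¹ ^ (2 : ℝ) = (2 * Real.cosh (w / 2))⁻¹ ^ 2 := fun w => by
    norm_cast
  simp only [e3] at h2
  have hne : (τ * Complex.I : ℂ) ≠ 0 := by simp [hτ]
  rw [← h2, add_comm, Complex.Gamma_add_one _ hne, mul_assoc, Complex.Gamma_mul_Gamma_one_sub,
    ← mul_assoc (π : ℂ), Complex.sin_mul_I]
  have : Complex.sinh (π * τ) ≠ 0 := by
    rw [← Complex.ofReal_mul, ← Complex.ofReal_sinh]
    exact_mod_cast (Real.sinh_ne_zero.2 (mul_ne_zero Real.pi_ne_zero hτ))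
  push_cast
  field_simp

/-- Fourier transform of `1/(2 cosh(w/2))`. -/
lemma fourier_sech (τ : ℝ) :
    ∫ w : ℝ, (((2 * Real.cosh (w / 2))⁻¹ : ℝ) : ℂ) * Complex.exp (τ * w * Complex.I) =
      ((π / Real.cosh (π * τ) : ℝ) : ℂ) := by
  have h := betaIntegral_eq_fourier (1 / 2) τ
  have h2 := Complex.Gamma_mul_Gamma_eq_betaIntegral (s := (1 / 2 : ℝ) + τ * Complex.I)
    (t := (1 / 2 : ℝ) - τ * Complex.I) (by simp) (by simp)
  rw [h] at h2
  have e : ((1 / 2 : ℝ) + τ * Complex.I : ℂ) + ((1 / 2 : ℝ) - τ * Complex.I) = 1 := by push_cast; ring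
  have e' : ((1 / 2 : ℝ) - τ * Complex.I : ℂ) = 1 - ((1 / 2 : ℝ) + τ * Complex.I) := by push_cast; ring
  rw [e, Complex.Gamma_one, e', Complex.Gamma_mul_Gamma_one_sub] at h2
  have e3 : (2 * (1 / 2) : ℝ) = 1 := by norm_num
  simp only [e3, Real.rpow_one, one_mul] at h2
  rw [← h2]
  have e4 : (π : ℂ) * ((1 / 2 : ℝ) + τ * Complex.I) = π * τ * Complex.I + π / 2 := by push_cast; ring
  rw [e4, Complex.sin_add_pi_div_two, Complex.cos_mul_I]
  push_cast
  rfl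

/-! ### The Fourier transform of `1 / (cosh w + cosh v)` -/

/-- Fubini's theorem for a Laplace transform: `t` is integrated out of `e^{-t φ(y)} h(y)`. -/
lemma laplace_fubini {Y : Type*} [MeasurableSpace Y] (ν : Measure Y) [SFinite ν] (φ : Y → ℝ)
    (h : Y → ℂ) (hφm : Measurable φ) (hφ : ∀ y, 0 < φ y) (hm : Measurable h)
    (hb : ∀ y, ‖h y‖ ≤ 1) (hi : Integrable (fun y => (φ y)⁻¹) ν) :
    Integrable (fun t : ℝ => ∫ y, ((Real.exp (-t * φ y) : ℝ) : ℂ) * h y ∂ν)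
      (volume.restrict (Set.Ioi (0 : ℝ))) ∧
    ∫ t in Set.Ioi (0 : ℝ), ∫ y, ((Real.exp (-t * φ y) : ℝ) : ℂ) * h y ∂ν =
      ∫ y, (((φ y)⁻¹ : ℝ) : ℂ) * h y ∂ν := by
  have hexp : ∀ y, ∫ t in Set.Ioi (0 : ℝ), Real.exp (-t * φ y) = (φ y)⁻¹ := fun y => by
    have := integral_exp_mul_Ioi (a := -φ y) (by linarith [hφ y]) 0
    rw [mul_zero, Real.exp_zero, neg_div_neg_eq, one_div] at this
    rw [← this]
    congr 1; ext t; congr 1; ring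
  have hexpi : ∀ y, Integrable (fun t => Real.exp (-t * φ y)) (volume.restrict (Set.Ioi (0 : ℝ))) :=
    fun y => by
    have := integrableOn_exp_mul_Ioi (a := -φ y) (by linarith [hφ y]) 0
    refine Integrable.congr this (Filter.Eventually.of_forall fun t => ?_)
    simp only
    congr 1; ring
  have hmeas : Measurable (fun p : ℝ × Y => ((Real.exp (-p.1 * φ p.2) : ℝ) : ℂ) * h p.2) := by
    fun_prop
  have hInt : Integrable (fun p : ℝ × Y => ((Real.exp (-p.1 * φ p.2) : ℝ) : ℂ) * h p.2)
      ((volume.restrict (Set.Ioi (0 : ℝ))).prod ν) := by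
    rw [integrable_prod_iff' hmeas.aestronglyMeasurable]
    constructor
    · exact Filter.Eventually.of_forall fun y => ((hexpi y).ofReal (𝕜 := ℂ)).mul_const (h y)
    · refine Integrable.mono' hi ?_ (Filter.Eventually.of_forall fun y => ?_)
      · exact (hmeas.norm.stronglyMeasurable.comp_measurable measurable_swap).integral_prod_right'.aestronglyMeasurable
      · rw [Real.norm_of_nonneg (integral_nonneg fun _ => norm_nonneg _), ← hexp y]
        refine integral_mono_of_nonneg (Filter.Eventually.of_forall fun _ => norm_nonneg _) (hexpi y)
          (Filter.Eventually.of_forall fun t => ?_)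
        simp only [norm_mul, Complex.norm_real, Real.norm_of_nonneg (Real.exp_pos _).le]
        exact mul_le_of_le_one_right (Real.exp_pos _).le (hb y)
  refine ⟨hInt.integral_prod_left, ?_⟩
  rw [integral_integral_swap hInt]
  congr 1
  ext y
  rw [integral_mul_const, integral_complex_ofReal, hexp]

lemma norm_cexp_mul_I (x y : ℝ) : ‖Complex.exp (x * y * Complex.I)‖ = 1 := by
  rw [← Complex.ofReal_mul, Complex.norm_exp_ofReal_mul_I]

lemma integrable_exp_neg_mul_cosh {t : ℝ} (ht : 0 < t) :
    Integrable (fun u : ℝ => Real.exp (-t * Real.cosh u)) := by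
  refine Integrable.mono' ((integrable_exp_neg_mul_abs' one_pos).const_mul (2 / t))
    (by fun_prop) (Filter.Eventually.of_forall fun u => ?_)
  rw [Real.norm_of_nonneg (Real.exp_pos _).le]
  have h1 := exp_abs_le_two_mul_cosh u
  have h2 := Real.add_one_le_exp (t * Real.cosh u)
  have h3 : 0 < Real.exp |u| := Real.exp_pos _
  have e1 : -t * Real.cosh u = -(t * Real.cosh u) := by ring
  have e2 : -1 * |u| = -|u| := by ring
  rw [e1, e2, Real.exp_neg, Real.exp_neg]
  have : 2 / t * (Real.exp |u|)⁻¹ = (t * Real.exp |u| / 2)⁻¹ := by field_simp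
  rw [this]
  apply inv_anti₀ (by positivity)
  nlinarith

/-- `2 K_{iτ}(t)` as a Fourier integral over the whole line. -/
lemma two_mul_besselKi {t : ℝ} (ht : 0 < t) (τ : ℝ) :
    ((2 * besselKi τ t : ℝ) : ℂ) =
      ∫ u : ℝ, ((Real.exp (-t * Real.cosh u) : ℝ) : ℂ) * Complex.exp (τ * u * Complex.I) := by
  have hi := integrable_exp_neg_mul_cosh ht
  have hc : Integrable (fun u : ℝ => Real.exp (-t * Real.cosh u) * Real.cos (τ * u)) :=
    hi.mul_bdd (c := 1) (by fun_prop) (Filter.Eventually.of_forall fun u => by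
      simpa using Real.abs_cos_le_one (τ * u))
  have hs : Integrable (fun u : ℝ => Real.exp (-t * Real.cosh u) * Real.sin (τ * u)) :=
    hi.mul_bdd (c := 1) (by fun_prop) (Filter.Eventually.of_forall fun u => by
      simpa using Real.abs_sin_le_one (τ * u))
  have hodd : ∫ u : ℝ, Real.exp (-t * Real.cosh u) * Real.sin (τ * u) = 0 := by
    have := integral_neg_eq_self (fun u : ℝ => Real.exp (-t * Real.cosh u) * Real.sin (τ * u)) volume
    simp only [Real.cosh_neg, mul_neg, Real.sin_neg, integral_neg] at this
    linarith
  have heven : ∫ u : ℝ, Real.exp (-t * Real.cosh u) * Real.cos (τ * u) = 2 * besselKi τ t := by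
    unfold besselKi
    rw [← integral_comp_abs (f := fun u => Real.exp (-t * Real.cosh u) * Real.cos (τ * u))]
    congr 1
    ext u
    rw [Real.cosh_abs]
    rcases abs_choice u with h | h <;> rw [h]
    simp
  have e : ∀ u : ℝ, ((Real.exp (-t * Real.cosh u) : ℝ) : ℂ) * Complex.exp (τ * u * Complex.I) =
      ((Real.exp (-t * Real.cosh u) * Real.cos (τ * u) : ℝ) : ℂ) +
      ((Real.exp (-t * Real.cosh u) * Real.sin (τ * u) : ℝ) : ℂ) * Complex.I := fun u => by
    rw [Complex.exp_mul_I]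
    push_cast
    ring
  simp_rw [e]
  rw [integral_add hc.ofReal (hs.ofReal.mul_const _), integral_mul_const, integral_complex_ofReal,
    integral_complex_ofReal, hodd, heven]
  simp

lemma logis_sub (u v : ℝ) :
    logis (u + v) - logis (u - v) = Real.sinh v * (Real.cosh u + Real.cosh v)⁻¹ := by
  have hv : Real.exp (-v) = (Real.exp v)⁻¹ := Real.exp_neg v
  have hu : Real.exp (-u) = (Real.exp u)⁻¹ := Real.exp_neg u
  unfold logis
  rw [Real.sinh_eq, Real.cosh_eq, Real.cosh_eq, neg_add, neg_sub, Real.exp_add, sub_eq_add_neg v,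
    Real.exp_add, hu, hv]
  have := Real.exp_pos u
  have := Real.exp_pos v
  field_simp
  ring

lemma integrable_sech_sq : Integrable (fun w : ℝ => (2 * Real.cosh (w / 2))⁻¹ ^ 2) := by
  have hc : Continuous (fun w : ℝ => (2 * Real.cosh (w / 2))⁻¹ ^ 2) := by
    refine Continuous.pow (Continuous.inv₀ (by fun_prop) fun w => ?_) 2
    have := Real.cosh_pos (w / 2)
    positivity
  refine Integrable.mono' (integrable_exp_neg_mul_abs' one_pos) hc.aestronglyMeasurable
    (Filter.Eventually.of_forall fun w => ?_)
  rw [Real.norm_of_nonneg (by positivity)]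
  have h1 := exp_abs_le_two_mul_cosh (w / 2)
  have h2 := inv_anti₀ (Real.exp_pos _) h1
  have h3 : Real.exp (-1 * |w|) = ((Real.exp |w / 2|)⁻¹) ^ 2 := by
    rw [← Real.exp_neg, ← Real.exp_nat_mul, abs_div, abs_two]
    congr 1; push_cast; ring
  rw [h3]
  have := Real.cosh_pos (w / 2)
  gcongr

/-- Fourier transform of `u ↦ sinh v / (cosh u + cosh v)`, which is the integral over `s ∈ [-v, v]`
of the translates by `s` of `1/(4 cosh²(u/2))`. -/
lemma fourier_inv_cosh_add {τ : ℝ} (hτ : τ ≠ 0) (v : ℝ) :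
    (Real.sinh v : ℂ) * ∫ u : ℝ, (((Real.cosh u + Real.cosh v)⁻¹ : ℝ) : ℂ) *
      Complex.exp (τ * u * Complex.I) =
      ((2 * π * Real.sin (τ * v) / Real.sinh (π * τ) : ℝ) : ℂ) := by
  have hcont : Continuous (fun w : ℝ => (2 * Real.cosh (w / 2))⁻¹ ^ 2) := by
    refine Continuous.pow (Continuous.inv₀ (by fun_prop) fun w => ?_) 2
    have := Real.cosh_pos (w / 2)
    positivity
  have h1 : ∀ u : ℝ, ∫ s in (-v)..v, (2 * Real.cosh ((s + u) / 2))⁻¹ ^ 2 =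
      Real.sinh v * (Real.cosh u + Real.cosh v)⁻¹ := fun u => by
    rw [intervalIntegral.integral_comp_add_right (fun w => (2 * Real.cosh (w / 2))⁻¹ ^ 2),
      intervalIntegral.integral_eq_sub_of_hasDerivAt (f := logis)
      (fun w _ => by simpa only [logis_mul] using hasDerivAt_logis w)
      (hcont.intervalIntegrable _ _), ← logis_sub]
    congr 2 <;> ring
  have hInt : Integrable (Function.uncurry fun (s u : ℝ) =>
      (((2 * Real.cosh ((s + u) / 2))⁻¹ ^ 2 : ℝ) : ℂ) * Complex.exp (τ * u * Complex.I))
      ((volume.restrict (Set.uIoc (-v) v)).prod volume) := by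
    have hm : Continuous (Function.uncurry fun (s u : ℝ) =>
      (((2 * Real.cosh ((s + u) / 2))⁻¹ ^ 2 : ℝ) : ℂ) * Complex.exp (τ * u * Complex.I)) := by
      unfold Function.uncurry
      refine Continuous.mul (Complex.continuous_ofReal.comp
        (hcont.comp (continuous_fst.add continuous_snd))) (by fun_prop)
    rw [integrable_prod_iff hm.aestronglyMeasurable]
    have hn : ∀ s u : ℝ, ‖(((2 * Real.cosh ((s + u) / 2))⁻¹ ^ 2 : ℝ) : ℂ) *
        Complex.exp (τ * u * Complex.I)‖ = (2 * Real.cosh ((s + u) / 2))⁻¹ ^ 2 := fun s u => by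
      rw [norm_mul, norm_cexp_mul_I, mul_one, Complex.norm_real, Real.norm_of_nonneg (by positivity)]
    constructor
    · refine Filter.Eventually.of_forall fun s => ?_
      have := integrable_sech_sq.comp_add_left s
      refine Integrable.mono' this ?_ (Filter.Eventually.of_forall fun u => (hn s u).le)
      exact (hm.comp (by fun_prop : Continuous fun u : ℝ => (s, u))).aestronglyMeasurable
    · simp only [Function.uncurry_apply_pair, hn]
      simp_rw [integral_add_left_eq_self (fun w : ℝ => (2 * Real.cosh (w / 2))⁻¹ ^ 2)]
      have : IsFiniteMeasure (volume.restrict (Set.uIoc (-v) v)) := by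
        unfold Set.uIoc
        infer_instance
      exact integrable_const _
  have h2 := intervalIntegral_integral_swap hInt
  rw [← integral_const_mul]
  have h3 : ∀ u : ℝ, (Real.sinh v : ℂ) * ((((Real.cosh u + Real.cosh v)⁻¹ : ℝ) : ℂ) *
      Complex.exp (τ * u * Complex.I)) = ∫ s in (-v)..v,
      (((2 * Real.cosh ((s + u) / 2))⁻¹ ^ 2 : ℝ) : ℂ) * Complex.exp (τ * u * Complex.I) := fun u => by
    rw [intervalIntegral.integral_mul_const, intervalIntegral.integral_ofReal, h1]
    push_cast
    ring
  simp_rw [h3]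
  rw [← h2]
  have h4 : ∀ s : ℝ, ∫ u : ℝ, (((2 * Real.cosh ((s + u) / 2))⁻¹ ^ 2 : ℝ) : ℂ) *
      Complex.exp (τ * u * Complex.I) =
      Complex.exp ((-τ * Complex.I) * s) * ((π * τ / Real.sinh (π * τ) : ℝ) : ℂ) := fun s => by
    rw [← fourier_sech_sq hτ, ← integral_const_mul,
      ← integral_add_left_eq_self (fun w : ℝ => Complex.exp ((-τ * Complex.I) * s) *
        ((((2 * Real.cosh (w / 2))⁻¹ ^ 2 : ℝ) : ℂ) * Complex.exp (τ * w * Complex.I))) s]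
    congr 1
    ext u
    rw [mul_left_comm, ← Complex.exp_add]
    congr 2
    push_cast
    ring
  simp_rw [h4]
  have hτc : (τ : ℂ) ≠ 0 := by exact_mod_cast hτ
  rw [intervalIntegral.integral_mul_const, integral_exp_mul_complex (by simp [hτ])]
  have e : (Real.sin (τ * v) : ℂ) = (Complex.exp (-τ * Complex.I * v) -
      Complex.exp (-τ * Complex.I * (-v : ℝ))) * Complex.I / 2 := by
    rw [Complex.ofReal_sin, Complex.sin]
    congr 4
    · push_cast; ring
    · push_cast; ring
  have : (Real.sinh (π * τ) : ℂ) ≠ 0 := by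
    exact_mod_cast (Real.sinh_ne_zero.2 (mul_ne_zero Real.pi_ne_zero hτ))
  rw [Complex.ofReal_div, Complex.ofReal_div, Complex.ofReal_mul (2 * π), e]
  push_cast at *
  field_simp
  rw [Complex.I_sq]
  ring

/-! ### Laplace transform and `L²` norm of `K_{iτ}` -/

lemma measurable_besselKi (τ : ℝ) : Measurable (besselKi τ) := by
  have h : StronglyMeasurable (fun p : ℝ × ℝ => Real.exp (-p.1 * Real.cosh p.2) * Real.cos (τ * p.2)) :=
    (by fun_prop : Continuous _).stronglyMeasurable
  exact (h.integral_prod_right' (ν := volume.restrict (Set.Ioi (0 : ℝ)))).measurable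

/-- The Laplace transform of `K_{iτ}`:
`∫₀^∞ K_{iτ}(t) e^{-t cosh v} dt = π sin(τv) / (sinh(πτ) sinh v)`. -/
lemma laplace_besselKi {τ : ℝ} (hτ : τ ≠ 0) (v : ℝ) :
    Real.sinh v * ∫ t in Set.Ioi (0 : ℝ), besselKi τ t * Real.exp (-t * Real.cosh v) =
      π * Real.sin (τ * v) / Real.sinh (π * τ) := by
  have hi : Integrable (fun u : ℝ => (Real.cosh u + Real.cosh v)⁻¹) := by
    refine Integrable.mono' ((integrable_exp_neg_mul_abs' (c := 1 / 2) (by norm_num)).mul_const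
      (Real.exp (-(1 / 2) * |v|))) ?_ (Filter.Eventually.of_forall fun u => ?_)
    · exact (by fun_prop : Measurable fun u : ℝ => (Real.cosh u + Real.cosh v)⁻¹).aestronglyMeasurable
    · rw [Real.norm_of_nonneg (inv_pos.2 (cosh_add_cosh_pos u v)).le]
      exact inv_cosh_add_cosh_le u v
  have h := (laplace_fubini volume (fun u : ℝ => Real.cosh u + Real.cosh v)
    (fun u => Complex.exp (τ * u * Complex.I)) (by fun_prop) (fun u => cosh_add_cosh_pos u v)
    (by fun_prop) (fun u => (norm_cexp_mul_I τ u).le) hi).2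
  have h2 := fourier_inv_cosh_add hτ v
  rw [← h] at h2
  have h3 : ∫ t in Set.Ioi (0 : ℝ), ∫ y : ℝ, ((Real.exp (-t * (Real.cosh y + Real.cosh v)) : ℝ) : ℂ) *
      Complex.exp (τ * y * Complex.I) =
      ((2 * ∫ t in Set.Ioi (0 : ℝ), besselKi τ t * Real.exp (-t * Real.cosh v) : ℝ) : ℂ) := by
    rw [← integral_const_mul, ← integral_complex_ofReal]
    refine setIntegral_congr_fun measurableSet_Ioi fun t ht => ?_
    rw [← mul_assoc, Complex.ofReal_mul, two_mul_besselKi ht, ← integral_mul_const]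
    congr 1
    ext y
    rw [mul_add, Real.exp_add]
    push_cast
    ring
  rw [h3] at h2
  norm_cast at h2
  have : 2 * π * Real.sin (τ * v) / Real.sinh (π * τ) =
    2 * (π * Real.sin (τ * v) / Real.sinh (π * τ)) := by ring
  rw [this] at h2
  linarith

lemma integral_inv_cosh : ∫ u : ℝ, (Real.cosh u)⁻¹ = π := by
  have h := fourier_sech 0
  simp only [Complex.ofReal_zero, zero_mul, Complex.exp_zero, mul_one, mul_zero, Real.cosh_zero,
    div_one] at h
  rw [integral_complex_ofReal] at h
  have h' : ∫ w : ℝ, (2 * Real.cosh (w / 2))⁻¹ = π := by exact_mod_cast h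
  rw [Measure.integral_comp_div (fun w => (2 * Real.cosh w)⁻¹) 2] at h'
  simp_rw [mul_inv] at h'
  rw [integral_const_mul] at h'
  simpa using h'

/-- `∫∫ e^{iτ(u+v)} / (cosh u + cosh v) du dv = π² / cosh(πτ)`, by the substitution `s = u + v` and
`cosh u + cosh (s - u) = 2 cosh(s/2) cosh(u - s/2)`. -/
lemma integral_inv_cosh_add_cosh (τ : ℝ) :
    ∫ u : ℝ, ∫ v : ℝ, (((Real.cosh u + Real.cosh v)⁻¹ : ℝ) : ℂ) *
      Complex.exp (τ * ((u + v : ℝ) : ℂ) * Complex.I) = ((π ^ 2 / Real.cosh (π * τ) : ℝ) : ℂ) := by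
  have h1 : ∀ u : ℝ, ∫ v : ℝ, (((Real.cosh u + Real.cosh v)⁻¹ : ℝ) : ℂ) *
      Complex.exp (τ * ((u + v : ℝ) : ℂ) * Complex.I) = ∫ s : ℝ,
      (((Real.cosh u + Real.cosh (s - u))⁻¹ : ℝ) : ℂ) * Complex.exp (τ * s * Complex.I) := fun u => by
    rw [← integral_sub_right_eq_self (fun v : ℝ => (((Real.cosh u + Real.cosh v)⁻¹ : ℝ) : ℂ) *
      Complex.exp (τ * ((u + v : ℝ) : ℂ) * Complex.I)) u]
    simp
  simp_rw [h1]
  rw [integral_integral_swap]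
  · have h2 : ∀ s : ℝ, ∫ u : ℝ, (((Real.cosh u + Real.cosh (s - u))⁻¹ : ℝ) : ℂ) *
        Complex.exp (τ * s * Complex.I) =
        π * ((((2 * Real.cosh (s / 2))⁻¹ : ℝ) : ℂ) * Complex.exp (τ * s * Complex.I)) := fun s => by
      have e : ∀ u : ℝ, (Real.cosh u + Real.cosh (s - u))⁻¹ =
          (2 * Real.cosh (s / 2))⁻¹ * (Real.cosh (u - s / 2))⁻¹ := fun u => by
        rw [← mul_inv]
        congr 1
        have e1 := Real.cosh_add (s / 2) (u - s / 2)
        have e2 := Real.cosh_sub (s / 2) (u - s / 2)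
        rw [show s / 2 + (u - s / 2) = u by ring] at e1
        rw [show s / 2 - (u - s / 2) = s - u by ring] at e2
        rw [e1, e2]
        ring
      rw [integral_mul_const, integral_complex_ofReal]
      simp_rw [e]
      rw [integral_const_mul, integral_sub_right_eq_self (fun u : ℝ => (Real.cosh u)⁻¹),
        integral_inv_cosh]
      push_cast
      ring
    simp_rw [h2]
    rw [integral_const_mul, fourier_sech]
    push_cast
    ring
  · have hq := integrable_exp_neg_mul_abs' (c := 1 / 4) (by norm_num)
    refine Integrable.mono' (hq.mul_prod hq) ?_ (Filter.Eventually.of_forall fun p => ?_)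
    · exact (by fun_prop : Measurable fun p : ℝ × ℝ =>
        (((Real.cosh p.1 + Real.cosh (p.2 - p.1))⁻¹ : ℝ) : ℂ) *
          Complex.exp (τ * p.2 * Complex.I)).aestronglyMeasurable
    · obtain ⟨u, s⟩ := p
      simp only [Function.uncurry_apply_pair]
      rw [norm_mul, norm_cexp_mul_I, mul_one, Complex.norm_real,
        Real.norm_of_nonneg (inv_pos.2 (cosh_add_cosh_pos _ _)).le]
      refine (inv_cosh_add_cosh_le _ _).trans ?_
      rw [← Real.exp_add, ← Real.exp_add]
      apply Real.exp_le_exp.2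
      have := abs_sub_abs_le_abs_sub s u
      linarith [abs_nonneg (s - u)]

/-- The `L²` norm of the Macdonald function: `∫₀^∞ K_{iτ}(t)² dt = π² / (4 cosh(πτ))`. -/
lemma integral_besselKi_sq (τ : ℝ) :
    Integrable (fun t => besselKi τ t ^ 2) (volume.restrict (Set.Ioi (0 : ℝ))) ∧
    ∫ t in Set.Ioi (0 : ℝ), besselKi τ t ^ 2 = π ^ 2 / (4 * Real.cosh (π * τ)) := by
  have hq := integrable_exp_neg_mul_abs' (c := 1 / 2) (by norm_num)
  have hi : Integrable (fun p : ℝ × ℝ => (Real.cosh p.1 + Real.cosh p.2)⁻¹) (volume.prod volume) := by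
    refine Integrable.mono' (hq.mul_prod hq) ?_ (Filter.Eventually.of_forall fun p => ?_)
    · exact (by fun_prop : Measurable fun p : ℝ × ℝ =>
        (Real.cosh p.1 + Real.cosh p.2)⁻¹).aestronglyMeasurable
    · rw [Real.norm_of_nonneg (inv_pos.2 (cosh_add_cosh_pos _ _)).le]
      exact inv_cosh_add_cosh_le _ _
  have hn : ∀ p : ℝ × ℝ, ‖Complex.exp (τ * ((p.1 + p.2 : ℝ) : ℂ) * Complex.I)‖ ≤ 1 := fun p =>
    (norm_cexp_mul_I _ _).le
  obtain ⟨h1, h2⟩ := laplace_fubini (volume.prod volume)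
    (fun p : ℝ × ℝ => Real.cosh p.1 + Real.cosh p.2)
    (fun p => Complex.exp (τ * ((p.1 + p.2 : ℝ) : ℂ) * Complex.I)) (by fun_prop)
    (fun p => cosh_add_cosh_pos _ _) (by fun_prop) hn hi
  have e : ∀ t ∈ Set.Ioi (0 : ℝ), ∫ p : ℝ × ℝ,
      ((Real.exp (-t * (Real.cosh p.1 + Real.cosh p.2)) : ℝ) : ℂ) *
      Complex.exp (τ * ((p.1 + p.2 : ℝ) : ℂ) * Complex.I) ∂(volume.prod volume) =
      ((4 * besselKi τ t ^ 2 : ℝ) : ℂ) := fun t ht => by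
    have e1 : ((4 * besselKi τ t ^ 2 : ℝ) : ℂ) =
      ((2 * besselKi τ t : ℝ) : ℂ) * ((2 * besselKi τ t : ℝ) : ℂ) := by push_cast; ring
    rw [e1, two_mul_besselKi ht, ← integral_prod_mul]
    congr 1
    ext p
    rw [mul_mul_mul_comm, ← Complex.exp_add, mul_add, Real.exp_add]
    push_cast
    congr 2
    ring
  have hInt : Integrable (fun t => ((4 * besselKi τ t ^ 2 : ℝ) : ℂ))
      (volume.restrict (Set.Ioi (0 : ℝ))) :=
    IntegrableOn.congr_fun h1 e measurableSet_Ioi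
  have hInt' := (hInt.re.const_mul (1 / 4 : ℝ))
  constructor
  · refine hInt'.congr (Filter.Eventually.of_forall fun t => ?_)
    simp only [RCLike.re_to_complex, Complex.ofReal_re]
    ring
  · rw [setIntegral_congr_fun measurableSet_Ioi e, integral_complex_ofReal, integral_const_mul] at h2
    have h3 : Integrable (fun p : ℝ × ℝ => (((Real.cosh p.1 + Real.cosh p.2)⁻¹ : ℝ) : ℂ) *
      Complex.exp (τ * ((p.1 + p.2 : ℝ) : ℂ) * Complex.I)) (volume.prod volume) :=
      hi.ofReal.mul_bdd (c := 1) (by fun_prop) (Filter.Eventually.of_forall hn)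
    rw [integral_prod _ h3, integral_inv_cosh_add_cosh] at h2
    have h4 : 4 * ∫ t in Set.Ioi (0 : ℝ), besselKi τ t ^ 2 = π ^ 2 / Real.cosh (π * τ) := by
      exact_mod_cast h2
    rw [mul_comm 4 (Real.cosh _), ← div_div, ← h4]
    ring

/-! ### The Abel-type integral of `K₀` -/

lemma setLIntegral_eq_of_zero_off {s t : Set ℝ} (hs : MeasurableSet s) (ht : MeasurableSet t)
    (hst : s ⊆ t) {g : ℝ → ENNReal} (hg : ∀ x ∈ t, x ∉ s → g x = 0) :
    ∫⁻ x in t, g x = ∫⁻ x in s, g x := by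
  rw [← lintegral_indicator hs, ← lintegral_indicator ht]
  congr 1
  ext x
  by_cases h1 : x ∈ s
  · simp [h1, hst h1]
  · by_cases h2 : x ∈ t
    · simp [h1, h2, hg x h2 h1]
    · simp [h1, h2]

lemma sqrt_sq_sub_sq_eq_zero {x t : ℝ} (hx : 0 < x) (hxt : x ≤ t) : √(x ^ 2 - t ^ 2) = 0 :=
  Real.sqrt_eq_zero_of_nonpos (by nlinarith)

/-- `K₀(cx) = ∫_x^∞ e^{-cw} / √(w² - x²) dw`, by the substitution `w = x cosh v`. The integral is
extended to `w ∈ (0, ∞)`: the square root, hence the quotient, is `0` for `w ≤ x`. -/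
lemma ofReal_besselKi_zero {x c : ℝ} (hx : 0 < x) (hc : 0 < c) :
    ENNReal.ofReal (besselKi 0 (x * c)) =
      ∫⁻ w in Set.Ioi (0 : ℝ), ENNReal.ofReal (Real.exp (-c * w) / √(w ^ 2 - x ^ 2)) := by
  unfold besselKi
  simp only [zero_mul, Real.cos_zero, mul_one]
  rw [ofReal_integral_eq_lintegral_ofReal
    (integrable_exp_neg_mul_cosh (mul_pos hx hc)).integrableOn
    (Filter.Eventually.of_forall fun _ => (Real.exp_pos _).le)]
  have himg : (fun v => x * Real.cosh v) '' Set.Ioi 0 = Set.Ioi x := by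
    ext w
    simp only [Set.mem_image, Set.mem_Ioi]
    constructor
    · rintro ⟨v, hv, rfl⟩
      have := Real.one_lt_cosh.2 hv.ne'
      nlinarith
    · intro hw
      have h1 : 1 < w / x := (one_lt_div hx).2 hw
      refine ⟨Real.arcosh (w / x), Real.arcosh_pos h1, ?_⟩
      rw [Real.cosh_arcosh h1.le]
      field_simp
  rw [setLIntegral_eq_of_zero_off (s := Set.Ioi x)
    (g := fun w => ENNReal.ofReal (Real.exp (-c * w) / √(w ^ 2 - x ^ 2)))
    measurableSet_Ioi measurableSet_Ioi (Set.Ioi_subset_Ioi hx.le)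
    (fun w hw hwx => by simp [sqrt_sq_sub_sq_eq_zero hw (not_lt.1 hwx)]), ← himg,
    lintegral_image_eq_lintegral_abs_deriv_mul (f' := fun v => x * Real.sinh v) measurableSet_Ioi
      (fun v _ => ((Real.hasDerivAt_cosh v).const_mul x).hasDerivWithinAt)
      (fun a ha b hb hab => Real.cosh_strictMonoOn.injOn (Set.mem_Ici.2 (le_of_lt ha))
        (Set.mem_Ici.2 (le_of_lt hb)) (mul_left_cancel₀ hx.ne' hab))]
  refine setLIntegral_congr_fun measurableSet_Ioi fun v hv => ?_
  have hs : 0 < x * Real.sinh v := mul_pos hx (Real.sinh_pos_iff.2 hv)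
  have e : (x * Real.cosh v) ^ 2 - x ^ 2 = (x * Real.sinh v) ^ 2 := by
    rw [mul_pow, mul_pow, Real.cosh_sq]; ring
  rw [e, Real.sqrt_sq hs.le, abs_of_pos hs, ← ENNReal.ofReal_mul hs.le]
  congr 1
  rw [mul_div_cancel₀ _ hs.ne']
  congr 1; ring

/-- The arcsine integral `∫_t^w x / (√(x² - t²) √(w² - x²)) dx = π/2`, by the substitution
`x² = t² cos² θ + w² sin² θ`. -/
lemma lintegral_arcsine {t w : ℝ} (ht : 0 < t) (hw : t < w) :
    ∫⁻ x in Set.Ioi (0 : ℝ), ENNReal.ofReal (x / √(x ^ 2 - t ^ 2)) * ENNReal.ofReal (1 / √(w ^ 2 - x ^ 2))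
      = ENNReal.ofReal (π / 2) := by
  have hD : 0 < w ^ 2 - t ^ 2 := by nlinarith
  set D := w ^ 2 - t ^ 2 with hDdef
  have hpos : ∀ θ : ℝ, 0 < t ^ 2 + D * Real.sin θ ^ 2 := fun θ => by positivity
  have hsin : ∀ θ ∈ Set.Ioo 0 (π / 2), 0 < Real.sin θ := fun θ h =>
    Real.sin_pos_of_pos_of_lt_pi h.1 (by linarith [h.2, Real.pi_pos])
  have hcos : ∀ θ ∈ Set.Ioo 0 (π / 2), 0 < Real.cos θ := fun θ h =>
    Real.cos_pos_of_mem_Ioo ⟨by linarith [h.1, Real.pi_pos], h.2⟩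
  have himg : (fun θ => √(t ^ 2 + D * Real.sin θ ^ 2)) '' Set.Ioo 0 (π / 2) = Set.Ioo t w := by
    ext x
    simp only [Set.mem_image]
    constructor
    · rintro ⟨θ, hθ, rfl⟩
      have h1 := hsin θ hθ
      have h2 := hcos θ hθ
      have h3 := Real.sin_sq_add_cos_sq θ
      constructor
      · apply Real.lt_sqrt_of_sq_lt
        have := mul_pos hD (pow_pos h1 2)
        linarith
      · rw [Real.sqrt_lt' (by linarith)]
        nlinarith [mul_pos hD (pow_pos h2 2)]
    · rintro ⟨h1, h2⟩
      have hx2 : 0 < x ^ 2 - t ^ 2 := by nlinarith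
      have hx3 : 0 < w ^ 2 - x ^ 2 := by nlinarith
      have hlt : √((x ^ 2 - t ^ 2) / D) < 1 := by
        rw [Real.sqrt_lt' one_pos, one_pow, div_lt_one hD]; linarith
      have hgt : 0 < √((x ^ 2 - t ^ 2) / D) := Real.sqrt_pos.2 (div_pos hx2 hD)
      refine ⟨Real.arcsin (√((x ^ 2 - t ^ 2) / D)), ⟨Real.arcsin_pos.2 hgt,
        Real.arcsin_lt_pi_div_two.2 hlt⟩, ?_⟩
      rw [Real.sin_arcsin (by linarith) hlt.le, Real.sq_sqrt (div_pos hx2 hD).le,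
        mul_div_cancel₀ _ hD.ne', add_sub_cancel, Real.sqrt_sq (by linarith)]
  have hderiv : ∀ θ, HasDerivAt (fun θ => √(t ^ 2 + D * Real.sin θ ^ 2))
      (D * Real.sin θ * Real.cos θ / √(t ^ 2 + D * Real.sin θ ^ 2)) θ := fun θ => by
    have := ((((Real.hasDerivAt_sin θ).pow 2).const_mul D).const_add (t ^ 2)).sqrt (hpos θ).ne'
    simp only [Pi.pow_apply] at this
    refine this.congr_deriv ?_
    push_cast
    field_simp
  have hinj : Set.InjOn (fun θ => √(t ^ 2 + D * Real.sin θ ^ 2)) (Set.Ioo 0 (π / 2)) := by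
    intro a ha b hb hab
    have h1 := (Real.sqrt_inj (hpos a).le (hpos b).le).1 hab
    have h2 := mul_left_cancel₀ hD.ne' (add_left_cancel h1)
    have h3 := (pow_left_inj₀ (hsin a ha).le (hsin b hb).le two_ne_zero).1 h2
    exact Real.injOn_sin ⟨by linarith [ha.1, Real.pi_pos], ha.2.le⟩
      ⟨by linarith [hb.1, Real.pi_pos], hb.2.le⟩ h3
  rw [setLIntegral_eq_of_zero_off (s := Set.Ioo t w) measurableSet_Ioo measurableSet_Ioi
    (fun x hx => lt_trans ht hx.1), ← himg,
    lintegral_image_eq_lintegral_abs_deriv_mul measurableSet_Ioo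
      (fun θ _ => (hderiv θ).hasDerivWithinAt) hinj]
  · have : ∀ θ ∈ Set.Ioo 0 (π / 2), ENNReal.ofReal
        |D * Real.sin θ * Real.cos θ / √(t ^ 2 + D * Real.sin θ ^ 2)| *
        (ENNReal.ofReal (√(t ^ 2 + D * Real.sin θ ^ 2) /
          √(√(t ^ 2 + D * Real.sin θ ^ 2) ^ 2 - t ^ 2)) *
        ENNReal.ofReal (1 / √(w ^ 2 - √(t ^ 2 + D * Real.sin θ ^ 2) ^ 2))) = 1 := fun θ hθ => by
      have h1 := hsin θ hθ
      have h2 := hcos θ hθ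
      have hx := Real.sqrt_pos.2 (hpos θ)
      rw [Real.sq_sqrt (hpos θ).le]
      have e1 : t ^ 2 + D * Real.sin θ ^ 2 - t ^ 2 = D * Real.sin θ ^ 2 := by ring
      have e2 : w ^ 2 - (t ^ 2 + D * Real.sin θ ^ 2) = D * Real.cos θ ^ 2 := by
        rw [Real.cos_sq', hDdef]; ring
      rw [e1, e2, Real.sqrt_mul hD.le, Real.sqrt_mul hD.le, Real.sqrt_sq h1.le, Real.sqrt_sq h2.le,
        abs_of_pos (by positivity), ← ENNReal.ofReal_mul (by positivity),
        ← ENNReal.ofReal_mul (by positivity), ← ENNReal.ofReal_one]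
      congr 1
      have hsD := Real.sqrt_pos.2 hD
      have hDD : √D ^ 2 = D := Real.sq_sqrt hD.le
      field_simp
      rw [hDD]
    rw [setLIntegral_congr_fun measurableSet_Ioo this]
    simp
  · intro x hx hxs
    by_cases h : x ≤ t
    · simp [sqrt_sq_sub_sq_eq_zero hx h]
    · have hwx : w ≤ x := by
        by_contra hc
        exact hxs ⟨not_le.1 h, not_le.1 hc⟩
      simp [sqrt_sq_sub_sq_eq_zero (ht.trans hw) hwx]

lemma lintegral_kernel {t c : ℝ} (ht : 0 < t) (hc : 0 < c) :
    ∫⁻ x in Set.Ioi (0 : ℝ), ENNReal.ofReal (x * besselKi 0 (x * c) / √(x ^ 2 - t ^ 2)) =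
      ENNReal.ofReal (π * Real.exp (-t * c) / (2 * c)) := by
  have h1 : ∀ x ∈ Set.Ioi (0 : ℝ), ENNReal.ofReal (x * besselKi 0 (x * c) / √(x ^ 2 - t ^ 2)) =
      ∫⁻ w in Set.Ioi (0 : ℝ), ENNReal.ofReal (Real.exp (-c * w)) *
        (ENNReal.ofReal (x / √(x ^ 2 - t ^ 2)) * ENNReal.ofReal (1 / √(w ^ 2 - x ^ 2))) := fun x hx => by
    have hx : 0 < x := hx
    rw [mul_div_right_comm, ENNReal.ofReal_mul (by positivity), ofReal_besselKi_zero hx hc,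
      ← lintegral_const_mul _ (by fun_prop)]
    congr 1
    ext w
    rw [div_eq_mul_one_div (Real.exp _), ENNReal.ofReal_mul (Real.exp_pos _).le]
    ring
  rw [setLIntegral_congr_fun measurableSet_Ioi h1, lintegral_lintegral_swap (by
    unfold Function.uncurry; fun_prop)]
  simp_rw [fun w : ℝ => lintegral_const_mul (μ := volume.restrict (Set.Ioi (0 : ℝ)))
    (ENNReal.ofReal (Real.exp (-c * w)))
    (f := fun x => ENNReal.ofReal (x / √(x ^ 2 - t ^ 2)) * ENNReal.ofReal (1 / √(w ^ 2 - x ^ 2)))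
    (by fun_prop)]
  rw [setLIntegral_eq_of_zero_off (s := Set.Ioi t) measurableSet_Ioi measurableSet_Ioi
    (Set.Ioi_subset_Ioi ht.le), setLIntegral_congr_fun measurableSet_Ioi
    (fun w hw => by rw [lintegral_arcsine ht hw]), lintegral_mul_const _ (by fun_prop),
    ← ofReal_integral_eq_lintegral_ofReal (integrableOn_exp_mul_Ioi (by linarith) t)
    (Filter.Eventually.of_forall fun _ => (Real.exp_pos _).le),
    integral_exp_mul_Ioi (by linarith), ← ENNReal.ofReal_mul]
  · congr 1
    rw [neg_div_neg_eq, mul_comm (-c), neg_mul, mul_neg]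
    field_simp
  · rw [neg_div_neg_eq]; positivity
  · intro w hw hwt
    have hwt : w ≤ t := not_lt.1 hwt
    rw [mul_eq_zero]
    right
    rw [lintegral_eq_zero_iff (by fun_prop)]
    filter_upwards [ae_restrict_mem measurableSet_Ioi] with x hx
    by_cases h : x ≤ t
    · simp [sqrt_sq_sub_sq_eq_zero hx h]
    · simp [sqrt_sq_sub_sq_eq_zero hw (hwt.trans (not_le.1 h).le)]

lemma besselKi_zero_nonneg (x : ℝ) : 0 ≤ besselKi 0 x := by
  unfold besselKi
  refine integral_nonneg fun u => ?_
  simp only [zero_mul, Real.cos_zero, mul_one]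
  exact (Real.exp_pos _).le

/-- `∫_t^∞ x K₀(cx) / √(x² - t²) dx = π e^{-ct} / (2c)`. -/
lemma integral_kernel {t c : ℝ} (ht : 0 < t) (hc : 0 < c) :
    IntegrableOn (fun x => x * besselKi 0 (x * c) / √(x ^ 2 - t ^ 2)) (Set.Ioi (0 : ℝ)) ∧
    ∫ x in Set.Ioi (0 : ℝ), x * besselKi 0 (x * c) / √(x ^ 2 - t ^ 2) =
      π * Real.exp (-t * c) / (2 * c) := by
  have hm : Measurable (fun x => x * besselKi 0 (x * c) / √(x ^ 2 - t ^ 2)) := by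
    have := measurable_besselKi 0
    fun_prop
  have hnn : 0 ≤ᵐ[volume.restrict (Set.Ioi (0 : ℝ))]
      (fun x => x * besselKi 0 (x * c) / √(x ^ 2 - t ^ 2)) := by
    filter_upwards [ae_restrict_mem measurableSet_Ioi] with x hx
    exact div_nonneg (mul_nonneg (le_of_lt hx) (besselKi_zero_nonneg _)) (Real.sqrt_nonneg _)
  have h := lintegral_kernel ht hc
  constructor
  · refine (lintegral_ofReal_ne_top_iff_integrable hm.aestronglyMeasurable hnn).1 ?_
    rw [h]
    exact ENNReal.ofReal_ne_top
  · rw [integral_eq_lintegral_of_nonneg_ae hnn hm.aestronglyMeasurable, h,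
      ENNReal.toReal_ofReal (by positivity)]

/-! ### The pairing of `Φₙ` with `Lₘ` -/

/-- The bound `∫₀^∞ |K_{iτ}(t)| e^{-t} dt = O(e^{-πτ/2})`, from the `L²` norm and
`2|K| e^{-t} ≤ λ K² + λ⁻¹ e^{-2t}` with `λ = e^{πτ/2}`. -/
lemma integral_abs_besselKi_mul_exp (τ : ℝ) :
    Integrable (fun t => |besselKi τ t| * Real.exp (-t)) (volume.restrict (Set.Ioi (0 : ℝ))) ∧
    ∫ t in Set.Ioi (0 : ℝ), |besselKi τ t| * Real.exp (-t) ≤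
      (π ^ 2 / 4 + 1 / 4) * Real.exp (-π * τ / 2) := by
  obtain ⟨h1, h2⟩ := integral_besselKi_sq τ
  have h3 : Integrable (fun t => Real.exp (-2 * t)) (volume.restrict (Set.Ioi (0 : ℝ))) :=
    integrableOn_exp_mul_Ioi (by norm_num) 0
  have h4 : ∫ t in Set.Ioi (0 : ℝ), Real.exp (-2 * t) = 1 / 2 := by
    rw [integral_exp_mul_Ioi (by norm_num)]; norm_num
  set l := Real.exp (π * τ / 2) with hl
  have hl0 : 0 < l := Real.exp_pos _
  have hlinv : Real.exp (-π * τ / 2) = l⁻¹ := by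
    rw [hl, ← Real.exp_neg]; congr 1; ring
  have hdom : Integrable (fun t => 1 / 2 * (l * besselKi τ t ^ 2 + l⁻¹ * Real.exp (-2 * t)))
      (volume.restrict (Set.Ioi (0 : ℝ))) := ((h1.const_mul l).add (h3.const_mul l⁻¹)).const_mul _
  have hle : ∀ t : ℝ, |besselKi τ t| * Real.exp (-t) ≤
      1 / 2 * (l * besselKi τ t ^ 2 + l⁻¹ * Real.exp (-2 * t)) := fun t => by
    have e : Real.exp (-2 * t) = Real.exp (-t) ^ 2 := by
      rw [← Real.exp_nat_mul]; congr 1; push_cast; ring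
    rw [e, ← sq_abs (besselKi τ t)]
    have : 1 / 2 * (l * |besselKi τ t| ^ 2 + l⁻¹ * Real.exp (-t) ^ 2) - |besselKi τ t| * Real.exp (-t)
      = 1 / 2 * l⁻¹ * (l * |besselKi τ t| - Real.exp (-t)) ^ 2 := by
      field_simp
      ring
    have h0 : 0 ≤ 1 / 2 * l⁻¹ * (l * |besselKi τ t| - Real.exp (-t)) ^ 2 := by positivity
    linarith
  have hnn : ∀ t : ℝ, 0 ≤ |besselKi τ t| * Real.exp (-t) := fun t => by positivity
  constructor
  · refine Integrable.mono' hdom ?_ (Filter.Eventually.of_forall fun t => ?_)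
    · have := measurable_besselKi τ
      have hm : Measurable fun t => |besselKi τ t| * Real.exp (-t) :=
        (measurable_norm.comp this).mul (by fun_prop)
      exact hm.aestronglyMeasurable
    · rw [Real.norm_of_nonneg (hnn t)]
      exact hle t
  · refine (integral_mono_of_nonneg (Filter.Eventually.of_forall hnn) hdom
      (Filter.Eventually.of_forall hle)).trans ?_
    rw [integral_const_mul, integral_add (h1.const_mul l) (h3.const_mul l⁻¹), integral_const_mul,
      integral_const_mul, h2, h4, hlinv]
    have hcosh : l ^ 2 / 2 ≤ Real.cosh (π * τ) := by
      have e : l ^ 2 = Real.exp (π * τ) := by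
        rw [hl, ← Real.exp_nat_mul]; congr 1; push_cast; ring
      rw [e, Real.cosh_eq]
      linarith [Real.exp_pos (-(π * τ))]
    have : π ^ 2 / (4 * Real.cosh (π * τ)) ≤ π ^ 2 / (4 * (l ^ 2 / 2)) := by gcongr
    have h5 : l * (π ^ 2 / (4 * Real.cosh (π * τ))) ≤ π ^ 2 / 2 * l⁻¹ := by
      calc l * (π ^ 2 / (4 * Real.cosh (π * τ))) ≤ l * (π ^ 2 / (4 * (l ^ 2 / 2))) := by gcongr
        _ = π ^ 2 / 2 * l⁻¹ := by field_simp; ring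
    linarith

lemma integral_cos_int_mul {k : ℤ} (hk : k ≠ 0) : ∫ u in (-π)..π, Real.cos (k * u) = 0 := by
  have hk' : (k : ℝ) ≠ 0 := by exact_mod_cast hk
  rw [intervalIntegral.integral_comp_mul_left (fun u => Real.cos u) hk', integral_cos, mul_neg,
    Real.sin_neg, Real.sin_int_mul_pi]
  simp

lemma integral_sin_mul_sin_nat {n m : ℕ} (hn : 0 < n) :
    ∫ u in (-π)..π, Real.sin (n * u) * Real.sin (m * u) = if m = n then π else 0 := by
  have e : ∀ u : ℝ, Real.sin (n * u) * Real.sin (m * u) =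
      1 / 2 * (Real.cos (((n - m : ℤ) : ℝ) * u) - Real.cos (((n + m : ℤ) : ℝ) * u)) := fun u => by
    push_cast
    rw [sub_mul, add_mul, Real.cos_sub, Real.cos_add]
    ring
  simp_rw [e]
  rw [intervalIntegral.integral_const_mul, intervalIntegral.integral_sub
    ((by fun_prop : Continuous _).intervalIntegrable _ _)
    ((by fun_prop : Continuous _).intervalIntegrable _ _),
    integral_cos_int_mul (k := n + m) (by omega)]
  split_ifs with h
  · subst h
    simp
    ring
  · rw [integral_cos_int_mul (by omega)]
    simp

/-- The constant in the bound of `∫₀^∞ |Φₙ Lₘ|`. -/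
noncomputable def pairConst : ℝ :=
  (π ^ 2 / 4 + 1 / 4) * (Real.sinh (2 * π) * (π / 2) * (2 * π))

/-- The biorthogonality of `Φₙ` and `Lₘ`, together with the bound `∫₀^∞ |Φₙ Lₘ| = O(e^{-πm/2})`.
For fixed `x` the product `Φₙ(x) Lₘ(x)` is an integral over `(t, u) ∈ (0, ∞) × (-π, π]` of a
function that splits as a product; Fubini's theorem allows to integrate over `x` first. -/
lemma pairing {n m : ℕ} (hn : 0 < n) (hm : 0 < m) :
    Integrable (fun x => PhiKer n x * lebedevL m x) (volume.restrict (Set.Ioi (0 : ℝ))) ∧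
    ∫ x in Set.Ioi (0 : ℝ), |PhiKer n x * lebedevL m x| ≤ pairConst * Real.exp (-π * m / 2) ∧
    ∫ x in Set.Ioi (0 : ℝ), PhiKer n x * lebedevL m x =
      if m = n then π ^ 3 / Real.sinh (π * m) else 0 := by
  have hmR : (m : ℝ) ≠ 0 := by exact_mod_cast hm.ne'
  set T : Measure ℝ := volume.restrict (Set.Ioi (0 : ℝ)) with hT
  set U : Measure ℝ := volume.restrict (Set.Ioc (-π) π) with hU
  have hpi : -π ≤ π := by linarith [Real.pi_pos]
  obtain ⟨hKi, hKb⟩ := integral_abs_besselKi_mul_exp m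
  let S : ℝ → ℝ := fun u => Real.sinh (2 * u) * Real.sin (n * u)
  let F : ℝ × (ℝ × ℝ) → ℝ := fun p =>
    (besselKi m p.2.1 / √(p.1 ^ 2 - p.2.1 ^ 2)) * (p.1 * (besselKi 0 (p.1 * Real.cosh p.2.2) * S p.2.2))
  -- for fixed `(t, u)` the dependence on `x` is through the kernel of `integral_kernel`
  have hF : ∀ x t u, F (x, (t, u)) = (besselKi m t * S u) *
      (x * besselKi 0 (x * Real.cosh u) / √(x ^ 2 - t ^ 2)) := fun x t u => by
    simp only [F]; ring
  have hFm : Measurable F := by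
    have h1 := measurable_besselKi m
    have h2 := measurable_besselKi 0
    simp only [F, S]
    fun_prop
  -- the result of integrating `|F|` over `x`
  let G : ℝ × ℝ → ℝ := fun p => (besselKi m p.1 * S p.2) *
    (π * Real.exp (-p.1 * Real.cosh p.2) / (2 * Real.cosh p.2))
  have hGm : Measurable G := by
    have h1 := measurable_besselKi m
    simp only [G, S]
    fun_prop
  have hmem : ∀ᵐ p ∂(T.prod U), 0 < p.1 ∧ p.2 ∈ Set.Ioc (-π) π := by
    rw [hT, hU, Measure.prod_restrict]
    filter_upwards [ae_restrict_mem (measurableSet_Ioi.prod measurableSet_Ioc)] with p hp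
    exact hp
  have hGdom : ∀ p : ℝ × ℝ, 0 < p.1 ∧ p.2 ∈ Set.Ioc (-π) π → ‖G p‖ ≤
      (|besselKi m p.1| * Real.exp (-p.1)) * (Real.sinh (2 * π) * (π / 2)) := by
    rintro ⟨t, u⟩ ⟨ht, hu⟩
    simp only at ht hu
    have hc := Real.one_le_cosh u
    have hs : |S u| ≤ Real.sinh (2 * π) := by
      simp only [S]
      rw [abs_mul, Real.abs_sinh]
      have h1 : Real.sinh |2 * u| ≤ Real.sinh (2 * π) := by
        rw [Real.sinh_le_sinh, abs_mul, abs_two]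
        have := abs_le.2 ⟨hu.1.le, hu.2⟩
        linarith
      have h0 : 0 ≤ Real.sinh |2 * u| := Real.sinh_nonneg_iff.2 (abs_nonneg _)
      calc Real.sinh |2 * u| * |Real.sin (n * u)| ≤ Real.sinh |2 * u| * 1 := by
            gcongr; exact Real.abs_sin_le_one _
        _ ≤ _ := by linarith
    have hs0 : 0 ≤ Real.sinh (2 * π) := (abs_nonneg _).trans hs
    have h2 : π * Real.exp (-t * Real.cosh u) / (2 * Real.cosh u) ≤ π * Real.exp (-t) / (2 * 1) := by
      gcongr
      nlinarith
    simp only [G, norm_mul, Real.norm_eq_abs]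
    rw [abs_of_nonneg (show 0 ≤ π * Real.exp (-t * Real.cosh u) / (2 * Real.cosh u) by positivity)]
    calc |besselKi m t| * |S u| * (π * Real.exp (-t * Real.cosh u) / (2 * Real.cosh u))
        ≤ |besselKi m t| * Real.sinh (2 * π) * (π * Real.exp (-t) / (2 * 1)) := by gcongr
      _ = _ := by ring
  have hdom : Integrable (fun p : ℝ × ℝ => (|besselKi m p.1| * Real.exp (-p.1)) *
      (Real.sinh (2 * π) * (π / 2))) (T.prod U) := hKi.mul_prod (integrable_const _)
  have hGi : Integrable G (T.prod U) := by
    refine Integrable.mono' hdom hGm.aestronglyMeasurable ?_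
    filter_upwards [hmem] with p hp
    exact hGdom p hp
  have hnorm : ∀ p : ℝ × ℝ, 0 < p.1 → ∫ x, ‖F (x, p)‖ ∂T = ‖G p‖ := by
    rintro ⟨t, u⟩ ht
    have hk := (integral_kernel ht (Real.cosh_pos u)).2
    simp only [G, norm_mul (besselKi m t * S u)]
    rw [Real.norm_of_nonneg (show 0 ≤ π * Real.exp (-t * Real.cosh u) / (2 * Real.cosh u) by
      have := Real.cosh_pos u; positivity), ← hk, ← integral_const_mul]
    refine setIntegral_congr_fun measurableSet_Ioi fun x hx => ?_
    simp only
    rw [hF, norm_mul]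
    congr 1
    exact Real.norm_of_nonneg (div_nonneg (mul_nonneg (le_of_lt hx) (besselKi_zero_nonneg _))
      (Real.sqrt_nonneg _))
  have hFi : Integrable F (T.prod (T.prod U)) := by
    rw [integrable_prod_iff' hFm.aestronglyMeasurable]
    constructor
    · filter_upwards [hmem] with p hp
      obtain ⟨t, u⟩ := p
      simp_rw [hF]
      exact (integral_kernel hp.1 (Real.cosh_pos u)).1.const_mul _
    · refine hGi.norm.congr ?_
      filter_upwards [hmem] with p hp
      exact (hnorm p hp.1).symm
  have hinner : ∀ x ∈ Set.Ioi (0 : ℝ), ∫ p, F (x, p) ∂(T.prod U) = PhiKer n x * lebedevL m x := by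
    intro x hx
    have hx : 0 < x := hx
    simp only [F]
    rw [integral_prod_mul (fun t => besselKi m t / √(x ^ 2 - t ^ 2))
      (fun u => x * (besselKi 0 (x * Real.cosh u) * S u)), mul_comm]
    congr 1
    · unfold PhiKer
      rw [intervalIntegral.integral_of_le hpi, integral_const_mul]
      simp only [S, mul_assoc, hU]
    · unfold lebedevL
      rw [intervalIntegral.integral_of_le hx.le]
      -- the quotient is `0` for `t > x`, where the square root takes the value `0`
      refine setIntegral_eq_of_subset_of_forall_sdiff_eq_zero measurableSet_Ioi
        Set.Ioc_subset_Ioi_self fun t ht => ?_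
      have hxt : x < t := by
        by_contra hc
        exact ht.2 ⟨ht.1, not_lt.1 hc⟩
      simp [sqrt_sq_sub_sq_eq_zero hx hxt.le]
  refine ⟨?_, ?_, ?_⟩
  · exact IntegrableOn.congr_fun hFi.integral_prod_left hinner measurableSet_Ioi
  · calc ∫ x, |PhiKer n x * lebedevL m x| ∂T = ∫ x, ‖∫ p, F (x, p) ∂(T.prod U)‖ ∂T :=
          setIntegral_congr_fun measurableSet_Ioi fun x hx => by
            simp only [hinner x hx, Real.norm_eq_abs]
      _ ≤ ∫ x, ∫ p, ‖F (x, p)‖ ∂(T.prod U) ∂T :=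
          integral_mono hFi.integral_prod_left.norm hFi.norm.integral_prod_left
            fun x => norm_integral_le_integral_norm _
      _ = ∫ p, ∫ x, ‖F (x, p)‖ ∂T ∂(T.prod U) :=
          integral_integral_swap (f := fun x p => ‖F (x, p)‖) hFi.norm
      _ = ∫ p, ‖G p‖ ∂(T.prod U) := by
          refine integral_congr_ae ?_
          filter_upwards [hmem] with p hp
          exact hnorm p hp.1
      _ ≤ ∫ p, (|besselKi m p.1| * Real.exp (-p.1)) *
            (Real.sinh (2 * π) * (π / 2)) ∂(T.prod U) := by
          refine integral_mono_ae hGi.norm hdom ?_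
          filter_upwards [hmem] with p hp
          exact hGdom p hp
      _ = (∫ t, |besselKi m t| * Real.exp (-t) ∂T) * (Real.sinh (2 * π) * (π / 2) * (2 * π)) := by
          rw [integral_prod_mul (fun t => |besselKi m t| * Real.exp (-t))
            (fun _ => Real.sinh (2 * π) * (π / 2))]
          congr 1
          rw [hU, ← intervalIntegral.integral_of_le hpi, intervalIntegral.integral_const, smul_eq_mul]
          ring
      _ ≤ ((π ^ 2 / 4 + 1 / 4) * Real.exp (-π * m / 2)) *
            (Real.sinh (2 * π) * (π / 2) * (2 * π)) := by
          have : 0 ≤ Real.sinh (2 * π) := Real.sinh_nonneg_iff.2 (by positivity)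
          gcongr
      _ = pairConst * Real.exp (-π * m / 2) := by unfold pairConst; ring
  · have hG2 : ∀ p : ℝ × ℝ, 0 < p.1 → ∫ x, F (x, p) ∂T = G p := by
      rintro ⟨t, u⟩ ht
      simp_rw [hF]
      rw [integral_const_mul, (integral_kernel ht (Real.cosh_pos u)).2]
    have hfin : ∀ u : ℝ, ∫ t, G (t, u) ∂T =
        π ^ 2 / Real.sinh (π * m) * (Real.sin (n * u) * Real.sin (m * u)) := fun u => by
      have hl := laplace_besselKi hmR u
      have hc := Real.cosh_pos u
      have e : ∀ t, G (t, u) = π * Real.sin (n * u) * Real.sinh u *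
          (besselKi m t * Real.exp (-t * Real.cosh u)) := fun t => by
        simp only [G, S, Real.sinh_two_mul]
        field_simp
      simp_rw [e]
      rw [integral_const_mul, mul_assoc (π * Real.sin (n * u)), hl]
      ring
    calc ∫ x, PhiKer n x * lebedevL m x ∂T = ∫ x, ∫ p, F (x, p) ∂(T.prod U) ∂T :=
          setIntegral_congr_fun measurableSet_Ioi fun x hx => (hinner x hx).symm
      _ = ∫ p, ∫ x, F (x, p) ∂T ∂(T.prod U) :=
          integral_integral_swap (f := fun x p => F (x, p)) hFi
      _ = ∫ p, G p ∂(T.prod U) := by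
          refine integral_congr_ae ?_
          filter_upwards [hmem] with p hp
          exact hG2 p hp.1
      _ = ∫ u, ∫ t, G (t, u) ∂T ∂U := integral_prod_symm _ hGi
      _ = _ := by
          simp_rw [hfin]
          rw [integral_const_mul, hU, ← intervalIntegral.integral_of_le hpi,
            integral_sin_mul_sin_nat hn]
          split_ifs <;> ring

/-- A series of functions whose `L¹` norms are summable has an integrable sum. -/
lemma integrable_tsum_of_summable {α : Type*} [MeasurableSpace α] {μ : Measure α} {F : ℕ → α → ℂ}
    (hF : ∀ i, Integrable (F i) μ) (hs : Summable fun i => ∫ a, ‖F i a‖ ∂μ) :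
    Integrable (fun a => ∑' i, F i a) μ := by
  have h1 : ∑' i, ∫⁻ a, ‖F i a‖ₑ ∂μ ≠ ⊤ := by
    have e : ∀ i, ∫⁻ a, ‖F i a‖ₑ ∂μ = ENNReal.ofReal (∫ a, ‖F i a‖ ∂μ) := fun i =>
      (ofReal_integral_norm_eq_lintegral_enorm (hF i)).symm
    simp_rw [e]
    exact hs.tsum_ofReal_ne_top
  have h2 : ∫⁻ a, ∑' i, ‖F i a‖ₑ ∂μ ≠ ⊤ := by
    rwa [lintegral_tsum fun i => (hF i).1.enorm]
  have hae := ae_lt_top' (AEMeasurable.tsum fun i => (hF i).1.enorm) h2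
  have hsum : ∀ᵐ a ∂μ, Summable fun i => F i a := by
    filter_upwards [hae] with a ha
    exact Summable.of_enorm ha.ne
  refine ⟨?_, ?_⟩
  · refine aestronglyMeasurable_of_tendsto_ae (Filter.atTop (α := ℕ))
      (f := fun N a => ∑ i ∈ Finset.range N, F i a) (fun N => ?_) ?_
    · exact Finset.aestronglyMeasurable_fun_sum _ fun i _ => (hF i).1
    · filter_upwards [hsum] with a ha
      exact ha.hasSum.tendsto_sum_nat
  · refine lt_of_le_of_lt (lintegral_mono fun a => ?_) (lt_top_iff_ne_top.2 h2)
    exact enorm_tsum_le_tsum_enorm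


/-- Theorem 3: inversion of the discrete transform (1.6). -/
theorem lebedev_discrete_inversion_third
    (a : ℕ → ℂ)
    (hsum : Summable (fun n : ℕ => ‖a (n + 1)‖ * Real.exp (-π * ((n : ℝ) + 1) / 2)))
    (f : ℝ → ℂ)
    (hf : ∀ x : ℝ, 0 < x →
      f x = ∑' n : ℕ, a (n + 1) * ((lebedevL (n + 1) x : ℝ) : ℂ)) :
    ∀ n : ℕ, 0 < n →
      IntegrableOn (fun x : ℝ => ((PhiKer n x : ℝ) : ℂ) * f x) (Set.Ioi (0 : ℝ)) ∧
      a n = ((Real.sinh (π * n) / π ^ 3 : ℝ) : ℂ) *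
        ∫ x in Set.Ioi (0 : ℝ), ((PhiKer n x : ℝ) : ℂ) * f x := by
  intro n hn
  let F : ℕ → ℝ → ℂ := fun i x =>
    ((PhiKer n x : ℝ) : ℂ) * (a (i + 1) * ((lebedevL (i + 1) x : ℝ) : ℂ))
  have hFe : ∀ i x, F i x = a (i + 1) * ((PhiKer n x * lebedevL (i + 1) x : ℝ) : ℂ) := fun i x => by
    simp only [F]
    push_cast
    ring
  have hp := fun i : ℕ => pairing (m := i + 1) hn (Nat.succ_pos i)
  have hFi : ∀ i, Integrable (F i) (volume.restrict (Set.Ioi (0 : ℝ))) := fun i => by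
    rw [funext (hFe i)]
    exact ((hp i).1.ofReal).const_mul _
  have hFs : Summable fun i => ∫ x in Set.Ioi (0 : ℝ), ‖F i x‖ := by
    refine Summable.of_nonneg_of_le (fun i => integral_nonneg fun _ => norm_nonneg _) (fun i => ?_)
      (hsum.mul_left pairConst)
    have h := (hp i).2.1
    simp_rw [hFe, norm_mul, Complex.norm_real, Real.norm_eq_abs]
    rw [integral_const_mul]
    calc ‖a (i + 1)‖ * ∫ x in Set.Ioi (0 : ℝ), |PhiKer n x * lebedevL (i + 1) x|
        ≤ ‖a (i + 1)‖ * (pairConst * Real.exp (-π * ((i + 1 : ℕ) : ℝ) / 2)) := by gcongr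
      _ = _ := by push_cast; ring
  have hfF : ∀ x ∈ Set.Ioi (0 : ℝ), ∑' i, F i x = ((PhiKer n x : ℝ) : ℂ) * f x := fun x hx => by
    rw [hf x hx, tsum_mul_left]
  refine ⟨IntegrableOn.congr_fun (integrable_tsum_of_summable hFi hFs) hfF measurableSet_Ioi, ?_⟩
  have hS := (hasSum_integral_of_summable_integral_norm hFi hFs).tsum_eq
  rw [setIntegral_congr_fun measurableSet_Ioi hfF] at hS
  have hval : ∀ i, ∫ x in Set.Ioi (0 : ℝ), F i x =
      if i = n - 1 then a n * ((π ^ 3 / Real.sinh (π * n) : ℝ) : ℂ) else 0 := fun i => by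
    simp_rw [hFe]
    rw [integral_const_mul, integral_complex_ofReal, (hp i).2.2]
    by_cases h : i = n - 1
    · have h' : i + 1 = n := by omega
      rw [if_pos h, if_pos h', h']
    · rw [if_neg h, if_neg (by omega)]
      simp
  rw [← hS]
  simp_rw [hval]
  rw [tsum_ite_eq]
  have hsinh : (Real.sinh (π * n) : ℂ) ≠ 0 := by
    exact_mod_cast Real.sinh_ne_zero.2 (mul_ne_zero Real.pi_ne_zero (by exact_mod_cast hn.ne'))
  have hpi : (π : ℂ) ≠ 0 := by exact_mod_cast Real.pi_ne_zero
  rw [Complex.ofReal_div, Complex.ofReal_div, Complex.ofReal_pow]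
  field_simp
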